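/- Let α, β, c_f > 0, q_min < q_max, and let p : Fin (n+1) → ℝ be a monotone nondecreasing partition with p 0 = q_min and p n = q_max. Let d_0, …, d_{m−1} > 0 be edge lengths along a path, and let q_0, …, q_m ∈ [q_min, q_max] be charges satisfying the feasibility condition q_{k+1} ≤ min(q_max, q_k + β d_k) for every k < m. Then there exist partition indices i_0, …, i_m with q_k ∈ [p(i_k), p(i_k + 1)] for every k, such that for every k < m the relaxed edge with departure charge p(i_k + 1) and arrival charge p(i_{k+1}) is feasible (i.e., p(i_{k+1}) ≤ min(q_max, p(i_k + 1) + β d_k)), and the total relaxed cost satisfies Σ_{k<m} c_f·d_k·max(0, (p(i_{k+1}) − p(i_k + 1) + α d_k)/((α + β) d_k)) ≤ Σ_{k<m} c_f·d_k·max(0, (q_{k+1} − q_k + α d_k)/((α + β) d_k)). That is, every feasible solution of the original problem P1 induces a feasible solution of the relaxed problem P3 on the same vertex sequence with cost no larger. -/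

import Mathlib

/-- Given a monotone partition `p` of `[q_min, q_max]` into `n` sub-intervals,
edge lengths `d_k > 0` and charges `q_0, …, q_m ∈ [q_min, q_max]` satisfying the feasibility
condition `q_{k+1} ≤ min(q_max, q_k + β d_k)`, there exist partition indices `i_0, …, i_m`
with `q_k ∈ [p(i_k), p(i_k + 1)]` such that every relaxed edge (departure charge
`p(i_k + 1)`, arrival charge `p(i_{k+1})`) is feasible and the total relaxed cost is at most
the original cost.  Thus every feasible solution of P1 induces a P3-feasible solution on the
same vertex sequence with cost no larger. -/
theorem relaxation_dominates_feasible_solution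
    (α β cf qmin qmax : ℝ) (hα : 0 < α) (hβ : 0 < β) (hcf : 0 < cf)
    (hq' : qmin < qmax)
    (n m : ℕ) (p : Fin (n + 1) → ℝ) (hp : Monotone p)
    (hp0 : p 0 = qmin) (hpn : p (Fin.last n) = qmax)
    (d : Fin m → ℝ) (hd : ∀ k, 0 < d k)
    (q : Fin (m + 1) → ℝ) (hq : ∀ k, q k ∈ Set.Icc qmin qmax)
    (hfeas : ∀ k : Fin m, q k.succ ≤ min qmax (q k.castSucc + β * d k)) :
    ∃ i : Fin (m + 1) → Fin n,
      (∀ k, q k ∈ Set.Icc (p (i k).castSucc) (p (i k).succ)) ∧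
      (∀ k : Fin m,
        p (i k.succ).castSucc ≤ min qmax (p (i k.castSucc).succ + β * d k)) ∧
      (∑ k : Fin m, cf * d k *
          max 0 ((p (i k.succ).castSucc - p (i k.castSucc).succ + α * d k) /
            ((α + β) * d k))) ≤
        ∑ k : Fin m, cf * d k *
          max 0 ((q k.succ - q k.castSucc + α * d k) / ((α + β) * d k)) := by
  have cover : ∀ x ∈ Set.Icc qmin qmax, ∃ j : Fin n,
      x ∈ Set.Icc (p j.castSucc) (p j.succ) := by
    intro x hx
    by_contra hcon
    have step : ∀ j : Fin n, p j.castSucc ≤ x → p j.succ < x := by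
      intro j hj
      by_contra h
      exact hcon ⟨j, hj, not_lt.mp h⟩
    have all : ∀ j : Fin (n + 1), p j ≤ x := by
      intro j
      induction j using Fin.induction with
      | zero => rw [hp0]; exact hx.1
      | succ j ih => exact (step j ih).le
    cases n with
    | zero =>
      have h : p 0 = p (Fin.last 0) := rfl
      linarith
    | succ n' =>
      have h := step (Fin.last n') (all _)
      rw [Fin.succ_last, hpn] at h
      exact absurd hx.2 (not_le.mpr h)
  choose i hi using fun k => cover (q k) (hq k)
  refine ⟨i, hi, ?_, ?_⟩
  · intro k
    have h1 := (hi k.succ).1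
    have h2 := (hi k.castSucc).2
    have h3 := le_min_iff.mp (hfeas k)
    exact le_min (h1.trans h3.1) (by linarith [h3.2])
  · apply Finset.sum_le_sum
    intro k _
    have h1 := (hi k.succ).1
    have h2 := (hi k.castSucc).2
    have hk := hd k
    have hD : 0 ≤ (α + β) * d k := by positivity
    have hC : 0 ≤ cf * d k := by positivity
    exact mul_le_mul_of_nonneg_left
      (max_le_max le_rfl (div_le_div_of_nonneg_right (by linarith) hD)) hC
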